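/- Let T = {(x₁,x₂) ∈ ℝ² : x₁ > 0, x₂ > 0, x₁ + x₂ < 1}, α, β, γ > −1, ρ(x₁,x₂) = x₁^α x₂^β (1−x₁−x₂)^γ, Φ(x₁,x₂) = [[x₁(1−x₁), −x₁x₂], [−x₁x₂, x₂(1−x₂)]], and let L be the degenerate Helmholtz operator Lu = −x₁(1−x₁)∂²_{x₁}u + 2x₁x₂∂²_{x₁x₂}u − x₂(1−x₂)∂²_{x₂}u − (α+1−(α+β+γ+3)x₁)∂_{x₁}u − (β+1−(α+β+γ+3)x₂)∂_{x₂}u + (2+x₁²+x₂²)u. Suppose f ∈ L²(T,ρ) and u is a C² function on a neighborhood of the closed triangle T̄ that belongs to W(T,ρ,ρΦ), satisfies Lu = f on T, and satisfies the Neumann condition that at every interior point of each of the three edges of ∂T the limit from within T of ρ(x)(Φ(x)∇u(x))·n is 0, where n is the outward unit normal of that edge. Then for every v ∈ W(T,ρ,ρΦ) with weak gradient ∇v, ∫_T (∇v)ᵗ ρΦ ∇u dx₁dx₂ + ∫_T (2+x₁²+x₂²) v u ρ dx₁dx₂ = ∫_T v f ρ dx₁dx₂. -/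

import Mathlib

open MeasureTheory Filter

noncomputable section

abbrev Poly2 := MvPolynomial (Fin 2) ℝ

/-- Evaluation of a two-variable real polynomial at a point of `ℝ × ℝ`. -/
def pev (p : Poly2) (x : ℝ × ℝ) : ℝ := MvPolynomial.eval ![x.1, x.2] p

/-- `uᵗ Φ v` where `Φ` is the matrix with polynomial entries `p11 p12 p21 p22`. -/
def bilPhi (p11 p12 p21 p22 : Poly2) (x u v : ℝ × ℝ) : ℝ :=
  u.1 * (pev p11 x * v.1 + pev p12 x * v.2) + u.2 * (pev p21 x * v.1 + pev p22 x * v.2)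

/-- The (classical) gradient of a two-variable polynomial. -/
def polyGrad (p : Poly2) (x : ℝ × ℝ) : ℝ × ℝ :=
  (pev (MvPolynomial.pderiv (0 : Fin 2) p) x, pev (MvPolynomial.pderiv (1 : Fin 2) p) x)

/-- `ρ` is a weight function on `Ω`. -/
def IsWeight (Ω : Set (ℝ × ℝ)) (ρ : ℝ × ℝ → ℝ) : Prop :=
  Measurable ρ ∧ (∀ᵐ x ∂(volume.restrict Ω), 0 < ρ x) ∧ IntegrableOn ρ Ω

/-- `ρ` is a moment weight function on `Ω`. -/
def IsMomentWeight (Ω : Set (ℝ × ℝ)) (ρ : ℝ × ℝ → ℝ) : Prop :=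
  Measurable ρ ∧ (∀ᵐ x ∂(volume.restrict Ω), 0 < ρ x) ∧
    ∀ m n : ℕ, IntegrableOn (fun x : ℝ × ℝ => |x.1| ^ m * |x.2| ^ n * ρ x) Ω

/-- `Φ` is symmetric and positive definite at every point of `Ω`. -/
def SymPosDef (Ω : Set (ℝ × ℝ)) (p11 p12 p21 p22 : Poly2) : Prop :=
  p12 = p21 ∧ ∀ x ∈ Ω, ∀ ζ : ℝ × ℝ, ζ ≠ 0 → 0 < bilPhi p11 p12 p21 p22 x ζ ζ

/-- `Φ` is symmetric, has entries of degree at most 2, and is positive definite on `Ω`. -/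
def GoodPhi (Ω : Set (ℝ × ℝ)) (p11 p12 p21 p22 : Poly2) : Prop :=
  SymPosDef Ω p11 p12 p21 p22 ∧ p11.totalDegree ≤ 2 ∧ p12.totalDegree ≤ 2 ∧
    p21.totalDegree ≤ 2 ∧ p22.totalDegree ≤ 2

/-- The Pearson equation `div(ρΦ) = ρ(ψ₁,ψ₂)` with explicit degree-one polynomials
`ψⱼ(x) = d_{j1} x₁ + d_{j2} x₂ + e_j` having linearly independent linear parts. -/
def PearsonWith (Ω : Set (ℝ × ℝ)) (ρ : ℝ × ℝ → ℝ) (p11 p12 p21 p22 : Poly2)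
    (d11 d12 d21 d22 e1 e2 : ℝ) : Prop :=
  ContDiffOn ℝ 1 ρ Ω ∧ d11 * d22 - d12 * d21 ≠ 0 ∧
    (∀ x ∈ Ω,
      fderiv ℝ (fun y => ρ y * pev p11 y) x (1, 0) +
        fderiv ℝ (fun y => ρ y * pev p21 y) x (0, 1) = ρ x * (d11 * x.1 + d12 * x.2 + e1)) ∧
    (∀ x ∈ Ω,
      fderiv ℝ (fun y => ρ y * pev p12 y) x (1, 0) +
        fderiv ℝ (fun y => ρ y * pev p22 y) x (0, 1) = ρ x * (d21 * x.1 + d22 * x.2 + e2))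

/-- The Pearson equation `div(ρΦ) = ρ(ψ₁,ψ₂)` for some admissible `ψ₁, ψ₂`. -/
def Pearson (Ω : Set (ℝ × ℝ)) (ρ : ℝ × ℝ → ℝ) (p11 p12 p21 p22 : Poly2) : Prop :=
  ∃ d11 d12 d21 d22 e1 e2 : ℝ, PearsonWith Ω ρ p11 p12 p21 p22 d11 d12 d21 d22 e1 e2

/-- `div(ρΦv)` for a pair of polynomials `v = (v1, v2)`. -/
def divRhoPhi (ρ : ℝ × ℝ → ℝ) (p11 p12 p21 p22 v1 v2 : Poly2) (x : ℝ × ℝ) : ℝ :=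
  fderiv ℝ (fun y => ρ y * (pev p11 y * pev v1 y + pev p12 y * pev v2 y)) x (1, 0) +
    fderiv ℝ (fun y => ρ y * (pev p21 y * pev v1 y + pev p22 y * pev v2 y)) x (0, 1)

/-- Membership in `L²(Ω, ρ)`. -/
def MemL2 (Ω : Set (ℝ × ℝ)) (ρ : ℝ × ℝ → ℝ) (u : ℝ × ℝ → ℝ) : Prop :=
  Measurable u ∧ IntegrableOn (fun x => u x ^ 2 * ρ x) Ω

/-- Membership in the matrix-weighted Lebesgue space `L²(Ω, ρΦ)`. -/
def MemL2M (Ω : Set (ℝ × ℝ)) (ρ : ℝ × ℝ → ℝ) (p11 p12 p21 p22 : Poly2)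
    (w : ℝ × ℝ → ℝ × ℝ) : Prop :=
  Measurable w ∧ IntegrableOn (fun x => ρ x * bilPhi p11 p12 p21 p22 x (w x) (w x)) Ω

/-- `h` is a weak gradient of `u`. -/
def IsWeakGrad (Ω : Set (ℝ × ℝ)) (ρ : ℝ × ℝ → ℝ) (p11 p12 p21 p22 : Poly2)
    (u : ℝ × ℝ → ℝ) (h : ℝ × ℝ → ℝ × ℝ) : Prop :=
  MemL2M Ω ρ p11 p12 p21 p22 h ∧
    ∀ v1 v2 : Poly2,
      ∫ x in Ω, u x * divRhoPhi ρ p11 p12 p21 p22 v1 v2 x =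
        - ∫ x in Ω, ρ x * bilPhi p11 p12 p21 p22 x (h x) (pev v1 x, pev v2 x)

/-- Membership in `W(Ω, ρ, ρΦ)`, the closure of the polynomials in `W^{1,2}(Ω, ρ, ρΦ)`,
for a function `u` with weak gradient `g`. -/
def MemW (Ω : Set (ℝ × ℝ)) (ρ : ℝ × ℝ → ℝ) (p11 p12 p21 p22 : Poly2)
    (u : ℝ × ℝ → ℝ) (g : ℝ × ℝ → ℝ × ℝ) : Prop :=
  MemL2 Ω ρ u ∧ IsWeakGrad Ω ρ p11 p12 p21 p22 u g ∧
    ∀ ε : ℝ, 0 < ε → ∃ q : Poly2,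
      (∫ x in Ω, (u x - pev q x) ^ 2 * ρ x) +
        (∫ x in Ω, ρ x * bilPhi p11 p12 p21 p22 x (g x - polyGrad q x) (g x - polyGrad q x))
          < ε ^ 2

/-- The open triangle with vertices `(0,0)`, `(1,0)`, `(0,1)`. -/
def Ttri : Set (ℝ × ℝ) := {x : ℝ × ℝ | 0 < x.1 ∧ 0 < x.2 ∧ x.1 + x.2 < 1}

/-- The Jacobi-type weight `ρ(x) = x₁^α x₂^β (1−x₁−x₂)^γ`. -/
def rhoT (α β γ : ℝ) (x : ℝ × ℝ) : ℝ :=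
  x.1 ^ α * x.2 ^ β * (1 - x.1 - x.2) ^ γ

/-- The entry `φ₁₁ = x₁(1−x₁)` of the triangle matrix `Φ`. -/
def q11 : Poly2 := MvPolynomial.X 0 * (1 - MvPolynomial.X 0)

/-- The entry `φ₁₂ = φ₂₁ = −x₁x₂` of the triangle matrix `Φ`. -/
def q12 : Poly2 := -(MvPolynomial.X 0 * MvPolynomial.X 1)

/-- The entry `φ₂₂ = x₂(1−x₂)` of the triangle matrix `Φ`. -/
def q22 : Poly2 := MvPolynomial.X 1 * (1 - MvPolynomial.X 1)

/-- The classical gradient of a function of two variables. -/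
def gradF (u : ℝ × ℝ → ℝ) (x : ℝ × ℝ) : ℝ × ℝ :=
  (fderiv ℝ u x (1, 0), fderiv ℝ u x (0, 1))

/-- The degenerate Helmholtz operator `L` on the triangle. -/
def Lop (α β γ : ℝ) (u : ℝ × ℝ → ℝ) (x : ℝ × ℝ) : ℝ :=
  -(x.1 * (1 - x.1)) * fderiv ℝ (fun y => fderiv ℝ u y (1, 0)) x (1, 0) +
    2 * x.1 * x.2 * fderiv ℝ (fun y => fderiv ℝ u y (0, 1)) x (1, 0) -
    x.2 * (1 - x.2) * fderiv ℝ (fun y => fderiv ℝ u y (0, 1)) x (0, 1) -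
    (α + 1 - (α + β + γ + 3) * x.1) * fderiv ℝ u x (1, 0) -
    (β + 1 - (α + β + γ + 3) * x.2) * fderiv ℝ u x (0, 1) +
    (2 + x.1 ^ 2 + x.2 ^ 2) * u x

/-- First component of `Φ∇u`. -/
def phiGradU1 (u : ℝ × ℝ → ℝ) (x : ℝ × ℝ) : ℝ :=
  x.1 * (1 - x.1) * (gradF u x).1 - x.1 * x.2 * (gradF u x).2

/-- Second component of `Φ∇u`. -/
def phiGradU2 (u : ℝ × ℝ → ℝ) (x : ℝ × ℝ) : ℝ :=
  -(x.1 * x.2) * (gradF u x).1 + x.2 * (1 - x.2) * (gradF u x).2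

/-!
Let `p = x₁ x₂ (1 - x₁ - x₂)`. The matrix `Φ` degenerates at the edges in such a way that
`∇p · Φ∇u = p ((1 - 3 x₁) ∂₁u + (1 - 3 x₂) ∂₂u)`: the flux `ρΦ∇u` is tangent to the boundary to the
order at which `p` vanishes. Hence, for a cutoff function `χ`, the error `∇(χ (n p)) · ρΦ∇u` is
dominated by a multiple of `ρ` uniformly in `n`, and the divergence theorem for compactly supported
fields passes to the limit without a boundary term. This gives Green's identity
`∫ ∇φᵗ ρΦ ∇u = -∫ φ div (ρΦ∇u)` for polynomials `φ`. By Cauchy–Schwarz both sides of the weak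
formulation are continuous in `v` for the norm of `W`, in which the polynomials are dense.
-/

section IntegratedBilinForm

variable {X E : Type*} [MeasurableSpace X] {μ : Measure X} [AddCommGroup E] [Module ℝ E]
  {B : X → LinearMap.BilinForm ℝ E} {z w : X → E}

theorem integrable_bilinForm (hB : ∀ᵐ x ∂μ, (B x).IsPosSemidef)
    (hz : Integrable (fun x => B x (z x) (z x)) μ) (hw : Integrable (fun x => B x (w x) (w x)) μ)
    (hzw : AEStronglyMeasurable (fun x => B x (z x) (w x)) μ) :
    Integrable (fun x => B x (z x) (w x)) μ := by
  refine (hz.add hw).mono' hzw ?_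
  filter_upwards [hB] with x hBx
  have cauchySchwarz : B x (z x) (w x) ^ 2 ≤ B x (z x) (z x) * B x (w x) (w x) :=
    (B x).apply_sq_le_of_symm hBx.nonneg (LinearMap.BilinForm.isSymm_iff.1 hBx.isSymm) (z x) (w x)
  have hzz := hBx.nonneg (z x)
  have hww := hBx.nonneg (w x)
  exact abs_le_of_sq_le_sq (by simp only [Pi.add_apply]; nlinarith) (add_nonneg hzz hww)

theorem integrable_bilinForm_sub (hB : ∀ᵐ x ∂μ, (B x).IsPosSemidef)
    (hz : Integrable (fun x => B x (z x) (z x)) μ) (hw : Integrable (fun x => B x (w x) (w x)) μ)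
    (hzw : AEStronglyMeasurable (fun x => B x (z x) (w x)) μ) :
    Integrable (fun x => B x (z x - w x) (z x - w x)) μ := by
  refine ((hz.add hw).sub ((integrable_bilinForm hB hz hw hzw).const_mul 2)).congr ?_
  filter_upwards [hB] with x hBx
  have hsymm := hBx.isSymm.eq (w x) (z x)
  simp only [Pi.add_apply, Pi.sub_apply, map_sub, LinearMap.sub_apply]
  linarith

theorem sq_integral_bilinForm_le (hB : ∀ᵐ x ∂μ, (B x).IsPosSemidef)
    (hz : Integrable (fun x => B x (z x) (z x)) μ) (hw : Integrable (fun x => B x (w x) (w x)) μ)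
    (hzw : AEStronglyMeasurable (fun x => B x (z x) (w x)) μ) :
    (∫ x, B x (z x) (w x) ∂μ) ^ 2 ≤ (∫ x, B x (z x) (z x) ∂μ) * ∫ x, B x (w x) (w x) ∂μ := by
  have hzwi := integrable_bilinForm hB hz hw hzw
  have quadratic_nonneg (t : ℝ) : 0 ≤ (∫ x, B x (w x) (w x) ∂μ) * (t * t) +
      (2 * ∫ x, B x (z x) (w x) ∂μ) * t + ∫ x, B x (z x) (z x) ∂μ := by
    calc 0 ≤ ∫ x, B x (z x + t • w x) (z x + t • w x) ∂μ :=
          integral_nonneg_of_ae (hB.mono fun x hBx => hBx.nonneg _)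
      _ = ∫ x, (t * t * B x (w x) (w x) + 2 * t * B x (z x) (w x) + B x (z x) (z x)) ∂μ := by
          refine integral_congr_ae (hB.mono fun x hBx => ?_)
          have hsymm := hBx.isSymm.eq (w x) (z x)
          simp only [map_add, map_smul, LinearMap.add_apply, LinearMap.smul_apply, smul_eq_mul,
            hsymm]
          ring
      _ = _ := by
          rw [integral_add ((hw.const_mul _).fun_add (hzwi.const_mul _)) hz,
            integral_add (hw.const_mul _) (hzwi.const_mul _), integral_const_mul,
            integral_const_mul]
          ring
  have := discrim_le_zero quadratic_nonneg
  rw [discrim] at this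
  linarith

end IntegratedBilinForm

section WeightedL2

/-- The matrix `Φ(x)` as a bilinear form on `ℝ²`. -/
def bilPhiForm (p11 p12 p21 p22 : Poly2) (x : ℝ × ℝ) : LinearMap.BilinForm ℝ (ℝ × ℝ) :=
  LinearMap.mk₂ ℝ (bilPhi p11 p12 p21 p22 x)
    (fun a b c => by simp only [bilPhi, Prod.fst_add, Prod.snd_add]; ring)
    (fun r a b => by simp only [bilPhi, Prod.smul_fst, Prod.smul_snd, smul_eq_mul]; ring)
    (fun a b c => by simp only [bilPhi, Prod.fst_add, Prod.snd_add]; ring)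
    (fun r a b => by simp only [bilPhi, Prod.smul_fst, Prod.smul_snd, smul_eq_mul]; ring)

variable {Ω : Set (ℝ × ℝ)} {ρ : ℝ × ℝ → ℝ} {p11 p12 p21 p22 : Poly2}

theorem SymPosDef.isPosSemidef_bilPhiForm (hΦ : SymPosDef Ω p11 p12 p21 p22) {x : ℝ × ℝ}
    (hx : x ∈ Ω) : (bilPhiForm p11 p12 p21 p22 x).IsPosSemidef where
  eq a b := by
    simp only [bilPhiForm, LinearMap.mk₂_apply, bilPhi, hΦ.1]
    ring
  nonneg a := by
    rcases eq_or_ne a 0 with rfl | ha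
    · simp
    · exact (hΦ.2 x hx a ha).le

theorem continuous_pev (p : Poly2) : Continuous (pev p) :=
  (MvPolynomial.continuous_eval p).comp (by fun_prop)

theorem measurable_bilPhi {a b : ℝ × ℝ → ℝ × ℝ} (ha : Measurable a) (hb : Measurable b) :
    Measurable fun x => bilPhi p11 p12 p21 p22 x (a x) (b x) := by
  have hp (p : Poly2) : Measurable (pev p) := (continuous_pev p).measurable
  unfold bilPhi
  fun_prop

section Scalar

variable {v w : ℝ × ℝ → ℝ}

/-- The bilinear form `(a, b) ↦ r a b` on `ℝ`; at `r = ρ(x)` it is the integrand of the inner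
product of `L²(Ω, ρ)`. -/
def weightForm (r : ℝ) : LinearMap.BilinForm ℝ ℝ := r • LinearMap.mul ℝ ℝ

theorem weightForm_apply (r a b : ℝ) : weightForm r a b = a * b * r := by
  simp [weightForm, mul_comm]

theorem isPosSemidef_weightForm {r : ℝ} (hr : 0 ≤ r) : (weightForm r).IsPosSemidef where
  eq a b := by simp only [weightForm_apply, mul_comm a b]
  nonneg a := by
    rw [weightForm_apply]
    exact mul_nonneg (mul_self_nonneg a) hr

theorem MemL2.integrableOn_weightForm (hv : MemL2 Ω ρ v) :
    IntegrableOn (fun x => weightForm (ρ x) (v x) (v x)) Ω :=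
  hv.2.congr (.of_forall fun x => by simp only [weightForm_apply, sq])

theorem aestronglyMeasurable_weightForm (hρ : Measurable ρ) (hv : Measurable v)
    (hw : Measurable w) :
    AEStronglyMeasurable (fun x => weightForm (ρ x) (v x) (w x)) (volume.restrict Ω) := by
  simp only [weightForm_apply]
  exact ((hv.mul hw).mul hρ).aestronglyMeasurable

theorem integral_sq_mul_nonneg (hρ₀ : ∀ᵐ x ∂volume.restrict Ω, 0 ≤ ρ x) (v : ℝ × ℝ → ℝ) :
    0 ≤ ∫ x in Ω, v x ^ 2 * ρ x :=
  integral_nonneg_of_ae (hρ₀.mono fun x hx => mul_nonneg (sq_nonneg (v x)) hx)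

theorem MemL2.integrableOn_mul (hρ : Measurable ρ) (hρ₀ : ∀ᵐ x ∂volume.restrict Ω, 0 ≤ ρ x)
    (hv : MemL2 Ω ρ v) (hw : MemL2 Ω ρ w) : IntegrableOn (fun x => v x * w x * ρ x) Ω := by
  simpa only [IntegrableOn, weightForm_apply] using integrable_bilinForm
    (hρ₀.mono fun _ => isPosSemidef_weightForm) hv.integrableOn_weightForm
    hw.integrableOn_weightForm (aestronglyMeasurable_weightForm hρ hv.1 hw.1)

theorem MemL2.sub (hρ : Measurable ρ) (hρ₀ : ∀ᵐ x ∂volume.restrict Ω, 0 ≤ ρ x)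
    (hv : MemL2 Ω ρ v) (hw : MemL2 Ω ρ w) : MemL2 Ω ρ fun x => v x - w x := by
  refine ⟨hv.1.sub hw.1, ?_⟩
  simpa only [IntegrableOn, weightForm_apply, ← sq] using integrable_bilinForm_sub
    (hρ₀.mono fun _ => isPosSemidef_weightForm) hv.integrableOn_weightForm
    hw.integrableOn_weightForm (aestronglyMeasurable_weightForm hρ hv.1 hw.1)

theorem MemL2.sq_integral_mul_le (hρ : Measurable ρ) (hρ₀ : ∀ᵐ x ∂volume.restrict Ω, 0 ≤ ρ x)
    (hv : MemL2 Ω ρ v) (hw : MemL2 Ω ρ w) :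
    (∫ x in Ω, v x * w x * ρ x) ^ 2 ≤ (∫ x in Ω, v x ^ 2 * ρ x) * ∫ x in Ω, w x ^ 2 * ρ x := by
  simpa only [weightForm_apply, ← sq] using sq_integral_bilinForm_le
    (hρ₀.mono fun _ => isPosSemidef_weightForm) hv.integrableOn_weightForm
    hw.integrableOn_weightForm (aestronglyMeasurable_weightForm hρ hv.1 hw.1)

theorem MemL2.continuous_mul {c : ℝ × ℝ → ℝ} (hc : Continuous c) (hΩ : MeasurableSet Ω)
    (hΩb : Bornology.IsBounded Ω) (hv : MemL2 Ω ρ v) : MemL2 Ω ρ fun x => c x * v x :=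
  ⟨hc.measurable.mul hv.1, (hv.2.mul_continuousOn_of_subset (hc.pow 2).continuousOn hΩ
    hΩb.isCompact_closure subset_closure).congr (.of_forall fun x => by simp; ring)⟩

end Scalar

section Vector

variable {h g : ℝ × ℝ → ℝ × ℝ}

theorem SymPosDef.ae_isPosSemidef_smul_bilPhiForm (hΩ : MeasurableSet Ω)
    (hρ₀ : ∀ᵐ x ∂volume.restrict Ω, 0 ≤ ρ x) (hΦ : SymPosDef Ω p11 p12 p21 p22) :
    ∀ᵐ x ∂volume.restrict Ω, (ρ x • bilPhiForm p11 p12 p21 p22 x).IsPosSemidef := by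
  filter_upwards [hρ₀, ae_restrict_mem hΩ] with x hρx hx
  have hpos := hΦ.isPosSemidef_bilPhiForm hx
  exact ⟨hpos.isSymm.smul _, ⟨fun a => mul_nonneg hρx (hpos.nonneg a)⟩⟩

theorem SymPosDef.integral_bilPhi_self_nonneg (hΩ : MeasurableSet Ω)
    (hρ₀ : ∀ᵐ x ∂volume.restrict Ω, 0 ≤ ρ x) (hΦ : SymPosDef Ω p11 p12 p21 p22)
    (h : ℝ × ℝ → ℝ × ℝ) : 0 ≤ ∫ x in Ω, ρ x * bilPhi p11 p12 p21 p22 x (h x) (h x) :=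
  integral_nonneg_of_ae <|
    (hΦ.ae_isPosSemidef_smul_bilPhiForm hΩ hρ₀).mono fun x hx => hx.nonneg (h x)

theorem aestronglyMeasurable_smul_bilPhiForm (hρ : Measurable ρ) (hh : Measurable h)
    (hg : Measurable g) :
    AEStronglyMeasurable (fun x => (ρ x • bilPhiForm p11 p12 p21 p22 x) (h x) (g x))
      (volume.restrict Ω) :=
  (hρ.mul (measurable_bilPhi hh hg)).aestronglyMeasurable

theorem MemL2M.integrableOn_bilPhi (hΩ : MeasurableSet Ω) (hρ : Measurable ρ)
    (hρ₀ : ∀ᵐ x ∂volume.restrict Ω, 0 ≤ ρ x) (hΦ : SymPosDef Ω p11 p12 p21 p22)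
    (hh : MemL2M Ω ρ p11 p12 p21 p22 h) (hg : MemL2M Ω ρ p11 p12 p21 p22 g) :
    IntegrableOn (fun x => ρ x * bilPhi p11 p12 p21 p22 x (h x) (g x)) Ω :=
  integrable_bilinForm (hΦ.ae_isPosSemidef_smul_bilPhiForm hΩ hρ₀) hh.2 hg.2
    (aestronglyMeasurable_smul_bilPhiForm hρ hh.1 hg.1)

theorem MemL2M.sub (hΩ : MeasurableSet Ω) (hρ : Measurable ρ)
    (hρ₀ : ∀ᵐ x ∂volume.restrict Ω, 0 ≤ ρ x) (hΦ : SymPosDef Ω p11 p12 p21 p22)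
    (hh : MemL2M Ω ρ p11 p12 p21 p22 h) (hg : MemL2M Ω ρ p11 p12 p21 p22 g) :
    MemL2M Ω ρ p11 p12 p21 p22 fun x => h x - g x :=
  ⟨hh.1.sub hg.1, integrable_bilinForm_sub (hΦ.ae_isPosSemidef_smul_bilPhiForm hΩ hρ₀) hh.2 hg.2
    (aestronglyMeasurable_smul_bilPhiForm hρ hh.1 hg.1)⟩

theorem MemL2M.sq_integral_bilPhi_le (hΩ : MeasurableSet Ω) (hρ : Measurable ρ)
    (hρ₀ : ∀ᵐ x ∂volume.restrict Ω, 0 ≤ ρ x) (hΦ : SymPosDef Ω p11 p12 p21 p22)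
    (hh : MemL2M Ω ρ p11 p12 p21 p22 h) (hg : MemL2M Ω ρ p11 p12 p21 p22 g) :
    (∫ x in Ω, ρ x * bilPhi p11 p12 p21 p22 x (h x) (g x)) ^ 2 ≤
      (∫ x in Ω, ρ x * bilPhi p11 p12 p21 p22 x (h x) (h x)) *
        ∫ x in Ω, ρ x * bilPhi p11 p12 p21 p22 x (g x) (g x) :=
  sq_integral_bilinForm_le (hΦ.ae_isPosSemidef_smul_bilPhiForm hΩ hρ₀) hh.2 hg.2
    (aestronglyMeasurable_smul_bilPhiForm hρ hh.1 hg.1)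

end Vector

end WeightedL2

section Polynomials

theorem hasFDerivAt_pev (p : Poly2) (x : ℝ × ℝ) :
    HasFDerivAt (pev p) ((polyGrad p x).1 • ContinuousLinearMap.fst ℝ ℝ ℝ +
      (polyGrad p x).2 • ContinuousLinearMap.snd ℝ ℝ ℝ) x := by
  induction p using MvPolynomial.induction_on with
  | C a =>
    have hC : pev (MvPolynomial.C a) = fun _ => a := by ext; simp [pev]
    rw [hC]
    exact (hasFDerivAt_const a x).congr_fderiv (by simp [polyGrad, pev])
  | add p q hp hq =>
    have hadd : pev (p + q) = fun y => pev p y + pev q y := by ext; simp [pev]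
    rw [hadd]
    exact (hp.fun_add hq).congr_fderiv (by ext <;> simp [polyGrad, pev])
  | mul_X p i hp =>
    fin_cases i
    · have hmul : pev (p * MvPolynomial.X 0) = fun y => pev p y * y.1 := by ext; simp [pev]
      simp only [Fin.zero_eta, hmul]
      exact (hp.fun_mul hasFDerivAt_fst).congr_fderiv (by ext <;> simp [polyGrad, pev])
    · have hmul : pev (p * MvPolynomial.X 1) = fun y => pev p y * y.2 := by ext; simp [pev]
      simp only [Fin.mk_one, hmul]
      exact (hp.fun_mul hasFDerivAt_snd).congr_fderiv (by ext <;> simp [polyGrad, pev])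

theorem gradF_pev (p : Poly2) : gradF (pev p) = polyGrad p := by
  ext x <;> simp [gradF, (hasFDerivAt_pev p x).fderiv]

theorem contDiff_one_pev (p : Poly2) : ContDiff ℝ 1 (pev p) := by
  refine contDiff_one_iff_hasFDerivAt.2 ⟨_, ?_, hasFDerivAt_pev p⟩
  have hcont := fun i => continuous_pev (MvPolynomial.pderiv i p)
  unfold polyGrad
  fun_prop

theorem measurable_polyGrad (p : Poly2) : Measurable (polyGrad p) :=
  ((continuous_pev _).prodMk (continuous_pev _)).measurable

end Polynomials

section MomentWeight

variable {Ω : Set (ℝ × ℝ)} {ρ : ℝ × ℝ → ℝ} {p11 p12 p21 p22 : Poly2}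

theorem IsWeight.isMomentWeight (hρ : IsWeight Ω ρ) (hΩ : MeasurableSet Ω)
    (hΩb : Bornology.IsBounded Ω) : IsMomentWeight Ω ρ := by
  refine ⟨hρ.1, hρ.2.1, fun m n => ?_⟩
  exact hρ.2.2.continuousOn_mul_of_subset (Continuous.continuousOn (by fun_prop))
    hΩb.isCompact_closure hΩ subset_closure

theorem IsMomentWeight.ae_nonneg (hρ : IsMomentWeight Ω ρ) :
    ∀ᵐ x ∂volume.restrict Ω, 0 ≤ ρ x :=
  hρ.2.1.mono fun _ => le_of_lt

theorem IsMomentWeight.integrableOn_pev_mul (hρ : IsMomentWeight Ω ρ) (p : Poly2) :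
    IntegrableOn (fun x => pev p x * ρ x) Ω := by
  have monomial_integrable (m n : ℕ) : IntegrableOn (fun x => x.1 ^ m * x.2 ^ n * ρ x) Ω := by
    have hmeas := hρ.1
    exact Integrable.mono (hρ.2.2 m n) (by fun_prop) (.of_forall fun x => by simp)
  simp only [pev, MvPolynomial.eval_eq', Fin.prod_univ_two, Finset.sum_mul, mul_assoc]
  refine integrable_finsetSum _ fun d _ => ?_
  simpa [mul_assoc] using (monomial_integrable (d 0) (d 1)).const_mul (p.coeff d)

theorem IsMomentWeight.memL2_pev (hρ : IsMomentWeight Ω ρ) (p : Poly2) : MemL2 Ω ρ (pev p) := by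
  refine ⟨(continuous_pev p).measurable, (hρ.integrableOn_pev_mul (p ^ 2)).congr ?_⟩
  exact .of_forall fun x => by simp [pev]

theorem IsMomentWeight.memL2M_polyGrad (hρ : IsMomentWeight Ω ρ) (p : Poly2) :
    MemL2M Ω ρ p11 p12 p21 p22 (polyGrad p) := by
  let d (i : Fin 2) : Poly2 := MvPolynomial.pderiv i p
  refine ⟨measurable_polyGrad p, (hρ.integrableOn_pev_mul
    (d 0 * (p11 * d 0 + p12 * d 1) + d 1 * (p21 * d 0 + p22 * d 1))).congr ?_⟩
  exact .of_forall fun x => by simp [pev, bilPhi, polyGrad, d, mul_comm]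

end MomentWeight

section Density

variable {Ω : Set (ℝ × ℝ)} {ρ : ℝ × ℝ → ℝ} {p11 p12 p21 p22 : Poly2} {v w : ℝ × ℝ → ℝ}
  {h g : ℝ × ℝ → ℝ × ℝ}

theorem sq_add_le_mul_add {a b s t S T : ℝ} (hs : 0 ≤ s) (ht : 0 ≤ t) (hS : 0 ≤ S) (hT : 0 ≤ T)
    (ha : a ^ 2 ≤ s * S) (hb : b ^ 2 ≤ t * T) : (a + b) ^ 2 ≤ (s + t) * (S + T) := by
  have cross : 2 * (a * b) ≤ s * T + t * S := by
    refine (abs_le.1 (abs_le_of_sq_le_sq ?_ (by positivity))).2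
    have := mul_le_mul ha hb (sq_nonneg b) (by positivity)
    nlinarith [sq_nonneg (s * T - t * S)]
  nlinarith

theorem sq_integral_bilPhi_add_integral_mul_le (hΩ : MeasurableSet Ω) (hρ : Measurable ρ)
    (hρ₀ : ∀ᵐ x ∂volume.restrict Ω, 0 ≤ ρ x) (hΦ : SymPosDef Ω p11 p12 p21 p22)
    (hv : MemL2 Ω ρ v) (hw : MemL2 Ω ρ w) (hh : MemL2M Ω ρ p11 p12 p21 p22 h)
    (hg : MemL2M Ω ρ p11 p12 p21 p22 g) :
    ((∫ x in Ω, ρ x * bilPhi p11 p12 p21 p22 x (h x) (g x)) + ∫ x in Ω, v x * w x * ρ x) ^ 2 ≤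
      ((∫ x in Ω, ρ x * bilPhi p11 p12 p21 p22 x (h x) (h x)) + ∫ x in Ω, v x ^ 2 * ρ x) *
        ((∫ x in Ω, ρ x * bilPhi p11 p12 p21 p22 x (g x) (g x)) + ∫ x in Ω, w x ^ 2 * ρ x) :=
  sq_add_le_mul_add (hΦ.integral_bilPhi_self_nonneg hΩ hρ₀ h)
    (integral_sq_mul_nonneg hρ₀ v) (hΦ.integral_bilPhi_self_nonneg hΩ hρ₀ g)
    (integral_sq_mul_nonneg hρ₀ w) (hh.sq_integral_bilPhi_le hΩ hρ hρ₀ hΦ hg)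
    (hv.sq_integral_mul_le hρ hρ₀ hw)

theorem integral_bilPhi_sub_add_integral_sub_mul {v' : ℝ × ℝ → ℝ} {h' : ℝ × ℝ → ℝ × ℝ}
    (hΩ : MeasurableSet Ω) (hρ : Measurable ρ)
    (hρ₀ : ∀ᵐ x ∂volume.restrict Ω, 0 ≤ ρ x) (hΦ : SymPosDef Ω p11 p12 p21 p22)
    (hv : MemL2 Ω ρ v) (hv' : MemL2 Ω ρ v') (hw : MemL2 Ω ρ w)
    (hh : MemL2M Ω ρ p11 p12 p21 p22 h) (hh' : MemL2M Ω ρ p11 p12 p21 p22 h')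
    (hg : MemL2M Ω ρ p11 p12 p21 p22 g) :
    (∫ x in Ω, ρ x * bilPhi p11 p12 p21 p22 x (h x - h' x) (g x)) +
        (∫ x in Ω, (v x - v' x) * w x * ρ x) =
      ((∫ x in Ω, ρ x * bilPhi p11 p12 p21 p22 x (h x) (g x)) + ∫ x in Ω, v x * w x * ρ x) -
        ((∫ x in Ω, ρ x * bilPhi p11 p12 p21 p22 x (h' x) (g x)) +
          ∫ x in Ω, v' x * w x * ρ x) := by
  rw [add_sub_add_comm, ← integral_sub (hh.integrableOn_bilPhi hΩ hρ hρ₀ hΦ hg)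
    (hh'.integrableOn_bilPhi hΩ hρ hρ₀ hΦ hg), ← integral_sub (hv.integrableOn_mul hρ hρ₀ hw)
    (hv'.integrableOn_mul hρ hρ₀ hw)]
  congr 2 <;> ext x
  · simp only [bilPhi, Prod.fst_sub, Prod.snd_sub]
    ring
  · ring

theorem MemW.integral_add_integral_eq_zero (hΩ : MeasurableSet Ω) (hρ : IsMomentWeight Ω ρ)
    (hΦ : SymPosDef Ω p11 p12 p21 p22) (hw : MemL2 Ω ρ w) (hg : MemL2M Ω ρ p11 p12 p21 p22 g)
    (hpoly : ∀ q, (∫ x in Ω, ρ x * bilPhi p11 p12 p21 p22 x (polyGrad q x) (g x)) +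
      (∫ x in Ω, pev q x * w x * ρ x) = 0)
    (hv : MemW Ω ρ p11 p12 p21 p22 v h) :
    (∫ x in Ω, ρ x * bilPhi p11 p12 p21 p22 x (h x) (g x)) + ∫ x in Ω, v x * w x * ρ x = 0 := by
  obtain ⟨hvL2, ⟨hhL2, -⟩, approx⟩ := hv
  set I := (∫ x in Ω, ρ x * bilPhi p11 p12 p21 p22 x (h x) (g x)) + ∫ x in Ω, v x * w x * ρ x
  set M := (∫ x in Ω, ρ x * bilPhi p11 p12 p21 p22 x (g x) (g x)) + ∫ x in Ω, w x ^ 2 * ρ x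
  have M_nonneg : 0 ≤ M := add_nonneg (hΦ.integral_bilPhi_self_nonneg hΩ hρ.ae_nonneg g)
    (integral_sq_mul_nonneg hρ.ae_nonneg w)
  have sq_le (ε : ℝ) (hε : 0 < ε) : I ^ 2 ≤ ε ^ 2 * M := by
    obtain ⟨q, hq⟩ := approx ε hε
    have hqL2 := hρ.memL2_pev q
    have hqgL2 := hρ.memL2M_polyGrad (p11 := p11) (p12 := p12) (p21 := p21) (p22 := p22) q
    have cauchySchwarz := sq_integral_bilPhi_add_integral_mul_le hΩ hρ.1 hρ.ae_nonneg hΦ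
      (hvL2.sub hρ.1 hρ.ae_nonneg hqL2) hw (hhL2.sub hΩ hρ.1 hρ.ae_nonneg hΦ hqgL2) hg
    rw [integral_bilPhi_sub_add_integral_sub_mul hΩ hρ.1 hρ.ae_nonneg hΦ hvL2 hqL2 hw hhL2 hqgL2
      hg, hpoly q, sub_zero] at cauchySchwarz
    exact cauchySchwarz.trans (mul_le_mul_of_nonneg_right (by linarith) M_nonneg)
  have htendsto : Tendsto (fun ε : ℝ => ε ^ 2 * M) (nhdsWithin 0 (Set.Ioi 0)) (nhds 0) :=
    tendsto_nhdsWithin_of_tendsto_nhds (Continuous.tendsto' (by fun_prop) _ _ (by simp))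
  have sq_le_zero : I ^ 2 ≤ 0 := ge_of_tendsto htendsto (eventually_mem_nhdsWithin.mono sq_le)
  exact pow_eq_zero_iff two_ne_zero |>.1 (sq_le_zero.antisymm (sq_nonneg I))

end Density

section IndicatorOfOpen

variable {X M : Type*} [Zero M] {Ω K : Set X} {F : X → M}

theorem indicator_eq_zero_of_notMem (hFK : ∀ x ∈ Ω \ K, F x = 0) {x : X} (hx : x ∉ K) :
    Ω.indicator F x = 0 :=
  Set.indicator_apply_eq_zero.2 fun hxΩ => hFK x ⟨hxΩ, hx⟩

variable [TopologicalSpace X]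

theorem indicator_eventuallyEq_of_mem (hΩ : IsOpen Ω) {x : X} (hx : x ∈ Ω) :
    Ω.indicator F =ᶠ[nhds x] F :=
  (hΩ.eventually_mem hx).mono fun _ hy => Set.indicator_of_mem hy F

theorem indicator_eventuallyEq_zero_of_notMem (hK : IsClosed K) (hFK : ∀ x ∈ Ω \ K, F x = 0)
    {x : X} (hx : x ∉ K) : Ω.indicator F =ᶠ[nhds x] fun _ => 0 :=
  (hK.isOpen_compl.eventually_mem hx).mono fun _ => indicator_eq_zero_of_notMem hFK

end IndicatorOfOpen

section Cutoff

/-- A smooth step vanishing on `(-∞, 1]` and equal to `1` on `[2, ∞)`; the cutoffs near the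
boundary are `cutoff (n * p x)` for a defining function `p` of the domain. -/
def cutoff (s : ℝ) : ℝ := Real.smoothTransition (s - 1)

theorem contDiff_cutoff : ContDiff ℝ 1 cutoff :=
  Real.smoothTransition.contDiff.comp (contDiff_id.sub contDiff_const)

theorem cutoff_eq_zero {s : ℝ} (hs : s ≤ 1) : cutoff s = 0 :=
  Real.smoothTransition.zero_of_nonpos (by linarith)

theorem cutoff_eq_one {s : ℝ} (hs : 2 ≤ s) : cutoff s = 1 :=
  Real.smoothTransition.one_of_one_le (by linarith)

theorem abs_cutoff_le_one (s : ℝ) : |cutoff s| ≤ 1 :=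
  (abs_of_nonneg (Real.smoothTransition.nonneg _)).trans_le (Real.smoothTransition.le_one _)

theorem deriv_cutoff_eq_zero {s : ℝ} (hs : s ∉ Set.Icc 1 2) : deriv cutoff s = 0 := by
  obtain hs | hs : s < 1 ∨ 2 < s := by simpa [or_iff_not_imp_left] using hs
  · have : cutoff =ᶠ[nhds s] fun _ => 0 :=
      (eventually_lt_nhds hs).mono fun t ht => cutoff_eq_zero ht.le
    rw [this.deriv_eq, deriv_const]
  · have : cutoff =ᶠ[nhds s] fun _ => 1 :=
      (eventually_gt_nhds hs).mono fun t ht => cutoff_eq_one ht.le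
    rw [this.deriv_eq, deriv_const]

theorem exists_abs_mul_deriv_cutoff_le : ∃ C, ∀ s, |s * deriv cutoff s| ≤ C := by
  have hcont : Continuous fun s => s * deriv cutoff s :=
    continuous_id.mul (contDiff_cutoff.continuous_deriv le_rfl)
  have hsupp : HasCompactSupport fun s => s * deriv cutoff s :=
    .intro isCompact_Icc fun s hs => by rw [deriv_cutoff_eq_zero hs, mul_zero]
  exact hcont.bounded_above_of_compact_support hsupp

theorem eventually_cutoff_comp_eventuallyEq_one {X : Type*} [TopologicalSpace X] {p : X → ℝ}
    (hp : Continuous p) {x : X} (hpx : 0 < p x) :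
    ∀ᶠ n : ℕ in atTop, (fun y => cutoff (n * p y)) =ᶠ[nhds x] fun _ => 1 := by
  filter_upwards [(tendsto_natCast_atTop_atTop.atTop_mul_const hpx).eventually_gt_atTop 2] with n hn
  filter_upwards [(continuous_const.mul hp).continuousAt.eventually_const_lt hn]
    with y hy using cutoff_eq_one hy.le

theorem exists_isCompact_cutoff_comp_eq_zero {X : Type*} [PseudoMetricSpace X] [ProperSpace X]
    {Ω : Set X} {p : X → ℝ} (hΩ : IsOpen Ω) (hΩb : Bornology.IsBounded Ω) (hp : Continuous p)
    (hp_frontier : ∀ x ∈ frontier Ω, p x = 0) (c : ℝ) :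
    ∃ K ⊆ Ω, IsCompact K ∧ ∀ x ∈ Ω \ K, cutoff (c * p x) = 0 := by
  refine ⟨closure Ω ∩ {x | 1 ≤ c * p x}, fun x ⟨hxΩ, hxp⟩ => ?_,
    hΩb.isCompact_closure.inter_right (isClosed_le continuous_const (continuous_const.mul hp)),
    fun x ⟨hxΩ, hxK⟩ => cutoff_eq_zero ?_⟩
  · by_contra hx
    have := hp_frontier x (hΩ.frontier_eq ▸ ⟨hxΩ, hx⟩)
    norm_num [this] at hxp
  · by_contra! hxp
    exact hxK ⟨subset_closure hxΩ, hxp.le⟩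

theorem fderiv_cutoff_comp {E : Type*} [NormedAddCommGroup E] [NormedSpace ℝ E] {p : E → ℝ}
    {x : E} (hp : DifferentiableAt ℝ p x) (c : ℝ) :
    fderiv ℝ (fun y => cutoff (c * p y)) x = (c * deriv cutoff (c * p x)) • fderiv ℝ p x := by
  have hderiv := (contDiff_cutoff.differentiable one_ne_zero (c * p x)).hasDerivAt
  rw [mul_comm, ← smul_smul]
  exact (hderiv.comp_hasFDerivAt x (hp.hasFDerivAt.const_mul c)).fderiv

end Cutoff

section DivergenceTheorem

variable {E : Type*} [NormedAddCommGroup E] [NormedSpace ℝ E] {Ω K : Set E} {F : E → ℝ}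

theorem contDiff_indicator {n : WithTop ℕ∞} (hΩ : IsOpen Ω) (hF : ContDiffOn ℝ n F Ω)
    (hK : IsClosed K) (hKΩ : K ⊆ Ω) (hFK : ∀ x ∈ Ω \ K, F x = 0) :
    ContDiff ℝ n (Ω.indicator F) := by
  refine contDiff_iff_contDiffAt.2 fun x => ?_
  by_cases hx : x ∈ K
  · exact (hF.contDiffAt (hΩ.mem_nhds (hKΩ hx))).congr_of_eventuallyEq
      (indicator_eventuallyEq_of_mem hΩ (hKΩ hx))
  · exact contDiffAt_const.congr_of_eventuallyEq (indicator_eventuallyEq_zero_of_notMem hK hFK hx)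

theorem fderiv_indicator_apply (hΩ : IsOpen Ω) (hK : IsClosed K) (hKΩ : K ⊆ Ω)
    (hFK : ∀ x ∈ Ω \ K, F x = 0) (e : E) :
    (fun x => fderiv ℝ (Ω.indicator F) x e) = Ω.indicator fun x => fderiv ℝ F x e := by
  ext x
  by_cases hx : x ∈ Ω
  · rw [Set.indicator_of_mem hx, (indicator_eventuallyEq_of_mem hΩ hx).fderiv_eq]
  · rw [Set.indicator_of_notMem hx,
      (indicator_eventuallyEq_zero_of_notMem hK hFK fun hxK => hx (hKΩ hxK)).fderiv_eq,
      fderiv_fun_const, Pi.zero_apply, zero_apply]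

theorem sum_fderiv_mul_apply {ι : Type*} [Fintype ι] {G : ι → E → ℝ} {e : ι → E} {η : E → ℝ} {x : E}
    (hη : DifferentiableAt ℝ η x) (hG : ∀ i, DifferentiableAt ℝ (G i) x) :
    ∑ i, fderiv ℝ (fun y => η y * G i y) x (e i) =
      η x * ∑ i, fderiv ℝ (G i) x (e i) + ∑ i, fderiv ℝ η x (e i) * G i x := by
  rw [Finset.mul_sum, ← Finset.sum_add_distrib]
  refine Finset.sum_congr rfl fun i _ => ?_
  simp only [fderiv_fun_mul hη (hG i), add_apply, smul_apply, smul_eq_mul, mul_comm (G i x)]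

variable [MeasurableSpace E] [BorelSpace E] {μ : Measure E}

theorem integrable_fderiv_apply_of_hasCompactSupport [IsFiniteMeasureOnCompacts μ]
    (hF : ContDiff ℝ 1 F) (hsupp : HasCompactSupport F) (e : E) :
    Integrable (fun x => fderiv ℝ F x e) μ :=
  ((hF.continuous_fderiv one_ne_zero).clm_apply continuous_const).integrable_of_hasCompactSupport
    (hsupp.fderiv_apply ℝ e)

theorem integrableOn_fderiv_apply_of_isCompact [IsFiniteMeasureOnCompacts μ] (hΩ : IsOpen Ω)
    (hF : ContDiffOn ℝ 1 F Ω) (hK : IsCompact K) (hKΩ : K ⊆ Ω) (hFK : ∀ x ∈ Ω \ K, F x = 0)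
    (e : E) : IntegrableOn (fun x => fderiv ℝ F x e) Ω μ := by
  rw [← integrable_indicator_iff hΩ.measurableSet,
    ← fderiv_indicator_apply hΩ hK.isClosed hKΩ hFK e]
  exact integrable_fderiv_apply_of_hasCompactSupport (contDiff_indicator hΩ hF hK.isClosed hKΩ hFK)
    (.intro hK fun _ => indicator_eq_zero_of_notMem hFK) e

variable [FiniteDimensional ℝ E] [μ.IsAddHaarMeasure]

theorem integral_fderiv_apply_eq_zero_of_hasCompactSupport (hF : ContDiff ℝ 1 F)
    (hsupp : HasCompactSupport F) (e : E) : ∫ x, fderiv ℝ F x e ∂μ = 0 := by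
  have by_parts := integral_mul_fderiv_eq_neg_fderiv_mul_of_integrable (𝕜 := ℝ) (μ := μ)
    (f := fun _ => (1 : ℝ)) (g := F) (v := e) (by simp)
    (by simpa using integrable_fderiv_apply_of_hasCompactSupport hF hsupp e)
    (by simpa using hF.continuous.integrable_of_hasCompactSupport hsupp)
    (fun x _ => differentiableAt_const _) (fun x _ => hF.differentiable one_ne_zero x)
  simpa using by_parts

theorem setIntegral_fderiv_apply_eq_zero_of_isCompact (hΩ : IsOpen Ω) (hF : ContDiffOn ℝ 1 F Ω)
    (hK : IsCompact K) (hKΩ : K ⊆ Ω) (hFK : ∀ x ∈ Ω \ K, F x = 0) (e : E) :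
    ∫ x in Ω, fderiv ℝ F x e ∂μ = 0 := by
  rw [← integral_indicator hΩ.measurableSet, ← fderiv_indicator_apply hΩ hK.isClosed hKΩ hFK e]
  exact integral_fderiv_apply_eq_zero_of_hasCompactSupport
    (contDiff_indicator hΩ hF hK.isClosed hKΩ hFK)
    (.intro hK fun _ => indicator_eq_zero_of_notMem hFK) e

variable {ι : Type*} [Fintype ι] {G : ι → E → ℝ} {e : ι → E}

theorem setIntegral_sum_fderiv_eq_zero_of_isCompact (hΩ : IsOpen Ω)
    (hG : ∀ i, ContDiffOn ℝ 1 (G i) Ω) (hK : IsCompact K) (hKΩ : K ⊆ Ω)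
    (hGK : ∀ i, ∀ x ∈ Ω \ K, G i x = 0) : ∫ x in Ω, ∑ i, fderiv ℝ (G i) x (e i) ∂μ = 0 := by
  rw [integral_finsetSum _ fun i _ =>
    integrableOn_fderiv_apply_of_isCompact hΩ (hG i) hK hKΩ (hGK i) (e i)]
  exact Finset.sum_eq_zero fun i _ =>
    setIntegral_fderiv_apply_eq_zero_of_isCompact hΩ (hG i) hK hKΩ (hGK i) (e i)

theorem setIntegral_sum_fderiv_eq_zero_of_cutoff {η : ℕ → E → ℝ} {b : E → ℝ} (hΩ : IsOpen Ω)
    (hG : ∀ i, ContDiffOn ℝ 1 (G i) Ω)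
    (hdiv : IntegrableOn (fun x => ∑ i, fderiv ℝ (G i) x (e i)) Ω μ)
    (hη : ∀ n, ContDiffOn ℝ 1 (η n) Ω)
    (hη_supp : ∀ n, ∃ K ⊆ Ω, IsCompact K ∧ ∀ x ∈ Ω \ K, η n x = 0)
    (hη_le : ∀ n, ∀ x ∈ Ω, |η n x| ≤ 1)
    (hη_one : ∀ x ∈ Ω, ∀ᶠ n in atTop, η n =ᶠ[nhds x] fun _ => 1)
    (hb : IntegrableOn b Ω μ)
    (hηG : ∀ n, ∀ x ∈ Ω, |∑ i, fderiv ℝ (η n) x (e i) * G i x| ≤ b x) :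
    ∫ x in Ω, ∑ i, fderiv ℝ (G i) x (e i) ∂μ = 0 := by
  have hmem : ∀ᵐ x ∂μ.restrict Ω, x ∈ Ω := ae_restrict_mem hΩ.measurableSet
  have hdiff {H : E → ℝ} (hH : ContDiffOn ℝ 1 H Ω) {x : E} (hx : x ∈ Ω) : DifferentiableAt ℝ H x :=
    (hH.contDiffAt (hΩ.mem_nhds hx)).differentiableAt one_ne_zero
  have product_rule (n : ℕ) {x : E} (hx : x ∈ Ω) :=
    sum_fderiv_mul_apply (e := e) (hdiff (hη n) hx) fun i => hdiff (hG i) hx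
  have cutoff_vanishes (n : ℕ) : ∃ K ⊆ Ω, IsCompact K ∧ ∀ i, ∀ x ∈ Ω \ K, η n x * G i x = 0 := by
    obtain ⟨K, hKΩ, hK, hηK⟩ := hη_supp n
    exact ⟨K, hKΩ, hK, fun i x hx => by rw [hηK x hx, zero_mul]⟩
  choose K hKΩ hK hGK using cutoff_vanishes
  have cutoff_integral (n : ℕ) :
      ∫ x in Ω, ∑ i, fderiv ℝ (fun y => η n y * G i y) x (e i) ∂μ = 0 :=
    setIntegral_sum_fderiv_eq_zero_of_isCompact hΩ (fun i => (hη n).mul (hG i)) (hK n) (hKΩ n)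
      (hGK n)
  refine tendsto_nhds_unique (tendsto_integral_of_dominated_convergence
    (F := fun n x => ∑ i, fderiv ℝ (fun y => η n y * G i y) x (e i))
    (fun x => |∑ i, fderiv ℝ (G i) x (e i)| + b x) (fun n => ?_) (hdiv.abs.add hb) (fun n => ?_) ?_)
    (by simp only [cutoff_integral, tendsto_const_nhds])
  · exact (integrable_finsetSum _ fun i _ => integrableOn_fderiv_apply_of_isCompact hΩ
      ((hη n).mul (hG i)) (hK n) (hKΩ n) (hGK n i) (e i)).aestronglyMeasurable
  · filter_upwards [hmem] with x hx
    rw [product_rule n hx, Real.norm_eq_abs]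
    refine (abs_add_le _ _).trans (add_le_add ?_ (hηG n x hx))
    rw [abs_mul]
    exact mul_le_of_le_one_left (abs_nonneg _) (hη_le n x hx)
  · filter_upwards [hmem] with x hx
    refine tendsto_const_nhds.congr' ((hη_one x hx).mono fun n hn => ?_)
    simp [product_rule n hx, hn.eq_of_nhds, hn.fderiv_eq]

theorem setIntegral_sum_fderiv_eq_zero_of_tangent {p b : E → ℝ} (hΩ : IsOpen Ω)
    (hΩb : Bornology.IsBounded Ω) (hp : ContDiff ℝ 1 p) (hp_pos : ∀ x ∈ Ω, 0 < p x)
    (hp_frontier : ∀ x ∈ frontier Ω, p x = 0) (hG : ∀ i, ContDiffOn ℝ 1 (G i) Ω)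
    (hdiv : IntegrableOn (fun x => ∑ i, fderiv ℝ (G i) x (e i)) Ω μ) (hb : IntegrableOn b Ω μ)
    (htangent : ∀ x ∈ Ω, |∑ i, fderiv ℝ p x (e i) * G i x| ≤ p x * b x) :
    ∫ x in Ω, ∑ i, fderiv ℝ (G i) x (e i) ∂μ = 0 := by
  obtain ⟨C, hC⟩ := exists_abs_mul_deriv_cutoff_le
  refine setIntegral_sum_fderiv_eq_zero_of_cutoff (η := fun n x => cutoff (n * p x))
    (b := fun x => C * b x) hΩ hG hdiv
    (fun n => (contDiff_cutoff.comp (contDiff_const.mul hp)).contDiffOn)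
    (fun n => exists_isCompact_cutoff_comp_eq_zero hΩ hΩb hp.continuous hp_frontier n)
    (fun n x _ => abs_cutoff_le_one _)
    (fun x hx => eventually_cutoff_comp_eventuallyEq_one hp.continuous (hp_pos x hx))
    (hb.const_mul C) (fun n x hx => ?_)
  have hpx := hp_pos x hx
  have hbx : 0 ≤ b x := nonneg_of_mul_nonneg_right ((abs_nonneg _).trans (htangent x hx)) hpx
  simp only [fderiv_cutoff_comp (hp.differentiable one_ne_zero x), smul_apply, smul_eq_mul,
    mul_assoc, ← Finset.mul_sum]
  calc |n * (deriv cutoff (n * p x) * ∑ i, fderiv ℝ p x (e i) * G i x)|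
      = |n * deriv cutoff (n * p x)| * |∑ i, fderiv ℝ p x (e i) * G i x| := by
        rw [← mul_assoc, abs_mul]
    _ ≤ |n * deriv cutoff (n * p x)| * (p x * b x) := by gcongr; exact htangent x hx
    _ = |n * p x * deriv cutoff (n * p x)| * b x := by
        simp only [abs_mul, abs_of_pos hpx]
        ring
    _ ≤ C * b x := by gcongr; exact hC _

end DivergenceTheorem

section Triangle

theorem isOpen_Ttri : IsOpen Ttri :=
  (isOpen_lt continuous_const continuous_fst).inter
    ((isOpen_lt continuous_const continuous_snd).inter
      (isOpen_lt (continuous_fst.add continuous_snd) continuous_const))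

theorem isBounded_Ttri : Bornology.IsBounded Ttri := by
  refine (Metric.isBounded_Icc ((0 : ℝ), (0 : ℝ)) (1, 1)).subset fun x ⟨h₁, h₂, h₃⟩ => ?_
  exact ⟨⟨h₁.le, h₂.le⟩, show x.1 ≤ 1 by linarith, show x.2 ≤ 1 by linarith⟩

theorem closure_Ttri_subset : closure Ttri ⊆ {x | 0 ≤ x.1 ∧ 0 ≤ x.2 ∧ x.1 + x.2 ≤ 1} := by
  refine closure_minimal (fun x hx => ⟨hx.1.le, hx.2.1.le, hx.2.2.le⟩) ?_
  exact (isClosed_le continuous_const continuous_fst).inter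
    ((isClosed_le continuous_const continuous_snd).inter
      (isClosed_le (continuous_fst.add continuous_snd) continuous_const))

/-- The product of the three barycentric coordinates, a defining function of the triangle:
positive on `Ttri` and zero on its boundary. -/
def barycentricProd (x : ℝ × ℝ) : ℝ := x.1 * x.2 * (1 - x.1 - x.2)

theorem contDiff_barycentricProd {n : WithTop ℕ∞} : ContDiff ℝ n barycentricProd := by
  unfold barycentricProd
  fun_prop

theorem barycentricProd_pos {x : ℝ × ℝ} (hx : x ∈ Ttri) : 0 < barycentricProd x :=
  mul_pos (mul_pos hx.1 hx.2.1) (by linarith [hx.2.2])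

theorem barycentricProd_eq_zero_of_mem_frontier {x : ℝ × ℝ} (hx : x ∈ frontier Ttri) :
    barycentricProd x = 0 := by
  rw [isOpen_Ttri.frontier_eq] at hx
  obtain ⟨h₁, h₂, h₃⟩ := closure_Ttri_subset hx.1
  by_contra hne
  simp only [barycentricProd, mul_eq_zero, not_or] at hne
  obtain ⟨⟨hne₁, hne₂⟩, hne₃⟩ := hne
  exact hx.2 ⟨h₁.lt_of_ne' hne₁, h₂.lt_of_ne' hne₂, h₃.lt_of_ne fun h => hne₃ (by linarith)⟩

theorem gradF_barycentricProd (x : ℝ × ℝ) :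
    gradF barycentricProd x = (x.2 * (1 - 2 * x.1 - x.2), x.1 * (1 - x.1 - 2 * x.2)) := by
  have h₁ : HasFDerivAt Prod.fst (ContinuousLinearMap.fst ℝ ℝ ℝ) x := hasFDerivAt_fst
  have h₂ : HasFDerivAt Prod.snd (ContinuousLinearMap.snd ℝ ℝ ℝ) x := hasFDerivAt_snd
  have hp : HasFDerivAt barycentricProd _ x :=
    (h₁.fun_mul h₂).fun_mul ((h₁.const_sub 1).fun_sub h₂)
  ext <;> simp [gradF, hp.fderiv] <;> ring

theorem gradF_barycentricProd_mul_phiGradU (u : ℝ × ℝ → ℝ) (x : ℝ × ℝ) :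
    (gradF barycentricProd x).1 * phiGradU1 u x + (gradF barycentricProd x).2 * phiGradU2 u x =
      barycentricProd x * ((1 - 3 * x.1) * (gradF u x).1 + (1 - 3 * x.2) * (gradF u x).2) := by
  simp only [gradF_barycentricProd, phiGradU1, phiGradU2, barycentricProd]
  ring

theorem bilPhi_q (x a b : ℝ × ℝ) : bilPhi q11 q12 q12 q22 x a b =
    a.1 * (x.1 * (1 - x.1) * b.1 - x.1 * x.2 * b.2) +
      a.2 * (-(x.1 * x.2) * b.1 + x.2 * (1 - x.2) * b.2) := by
  simp only [bilPhi, pev, q11, q12, q22, map_mul, map_sub, map_neg, map_one,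
    MvPolynomial.eval_X, Matrix.cons_val_zero, Matrix.cons_val_one]
  ring

theorem symPosDef_q : SymPosDef Ttri q11 q12 q12 q22 := by
  refine ⟨rfl, fun x ⟨h₁, h₂, h₃⟩ ζ hζ => ?_⟩
  have h₄ : 0 < 1 - x.1 - x.2 := by linarith
  have sum_of_squares : bilPhi q11 q12 q12 q22 x ζ ζ = x.1 * x.2 * (ζ.1 - ζ.2) ^ 2 +
      (1 - x.1 - x.2) * (x.1 * ζ.1 ^ 2 + x.2 * ζ.2 ^ 2) := by rw [bilPhi_q]; ring
  rw [sum_of_squares]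
  obtain hζ₁ | hζ₂ : ζ.1 ≠ 0 ∨ ζ.2 ≠ 0 := by
    simpa [Prod.ext_iff, -not_and, not_and_or] using hζ
  all_goals positivity

end Triangle

section JacobiWeight

variable {α β γ : ℝ}

theorem measurable_rhoT : Measurable (rhoT α β γ) := by
  unfold rhoT
  fun_prop

theorem rhoT_pos {x : ℝ × ℝ} (hx : x ∈ Ttri) : 0 < rhoT α β γ x :=
  mul_pos (mul_pos (Real.rpow_pos_of_pos hx.1 α) (Real.rpow_pos_of_pos hx.2.1 β))
    (Real.rpow_pos_of_pos (by linarith [hx.2.2]) γ)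

theorem contDiffOn_rhoT {n : WithTop ℕ∞} : ContDiffOn ℝ n (rhoT α β γ) Ttri := by
  have hne : ∀ x ∈ Ttri, 1 - x.1 - x.2 ≠ 0 := fun x hx => by linarith [hx.2.2]
  exact ((contDiffOn_fst.rpow_const_of_ne fun x hx => hx.1.ne').mul
    (contDiffOn_snd.rpow_const_of_ne fun x hx => hx.2.1.ne')).mul
    (((contDiffOn_const.sub contDiffOn_fst).sub contDiffOn_snd).rpow_const_of_ne hne)

theorem gradF_rhoT {x : ℝ × ℝ} (hx : x ∈ Ttri) :
    gradF (rhoT α β γ) x = (rhoT α β γ x * (α / x.1 - γ / (1 - x.1 - x.2)),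
      rhoT α β γ x * (β / x.2 - γ / (1 - x.1 - x.2))) := by
  obtain ⟨h₁, h₂, h₃⟩ := hx
  have h₄ : 1 - x.1 - x.2 ≠ 0 := by linarith
  have hρ : HasFDerivAt (rhoT α β γ) _ x :=
    ((hasFDerivAt_fst.rpow_const (Or.inl h₁.ne')).fun_mul
      (hasFDerivAt_snd.rpow_const (Or.inl h₂.ne'))).fun_mul
      (((hasFDerivAt_fst.const_sub 1).fun_sub (hasFDerivAt_snd (𝕜 := ℝ))).rpow_const (Or.inl h₄))
  ext <;> simp [gradF, hρ.fderiv, rhoT, Real.rpow_sub_one h₁.ne', Real.rpow_sub_one h₂.ne',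
    Real.rpow_sub_one h₄] <;> field_simp <;> ring

theorem rpow_le_one_add_rpow {a c t : ℝ} (hc : 0 < c) (hct : c ≤ t) (ht : t ≤ 1) :
    t ^ a ≤ 1 + c ^ a := by
  rcases le_total 0 a with ha | ha
  · linarith [Real.rpow_le_one (hc.le.trans hct) ht ha, Real.rpow_nonneg hc.le a]
  · linarith [Real.rpow_le_rpow_of_nonpos hc hct ha]

/-- The power function `t ↦ t ^ a` on the unit interval `(0, 1)`, extended by zero so that it is
integrable on the whole line when `-1 < a`. -/
def unitRpow (a : ℝ) : ℝ → ℝ := (Set.Ioo 0 1).indicator (· ^ a)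

theorem unitRpow_of_mem {a t : ℝ} (ht : t ∈ Set.Ioo 0 1) : unitRpow a t = t ^ a :=
  Set.indicator_of_mem ht _

theorem integrable_unitRpow {a : ℝ} (ha : -1 < a) : Integrable (unitRpow a) :=
  (integrable_indicator_iff measurableSet_Ioo).2
    ((intervalIntegral.integrableOn_Ioo_rpow_iff one_pos).2 ha)

-- One of the barycentric coordinates is at least `1 / 3`, so its power is bounded.
theorem rhoT_le_sum_unitRpow {x : ℝ × ℝ} (hx : x ∈ Ttri) :
    rhoT α β γ x ≤
      (1 + (1 / 3) ^ α) * (unitRpow γ (1 - (x.1 + x.2)) * unitRpow β x.2) +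
      (1 + (1 / 3) ^ β) * (unitRpow α x.1 * unitRpow γ (1 - (x.2 + x.1))) +
      (1 + (1 / 3) ^ γ) * (unitRpow α x.1 * unitRpow β x.2) := by
  obtain ⟨h₁, h₂, h₃⟩ := hx
  have h₄ : 0 < 1 - x.1 - x.2 := by linarith
  rw [add_comm x.2, ← sub_sub, unitRpow_of_mem ⟨h₁, by linarith⟩,
    unitRpow_of_mem ⟨h₂, by linarith⟩, unitRpow_of_mem ⟨h₄, by linarith⟩]
  have hA : 0 ≤ (1 + (1 / 3) ^ α) * ((1 - x.1 - x.2) ^ γ * x.2 ^ β) := by positivity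
  have hB : 0 ≤ (1 + (1 / 3) ^ β) * (x.1 ^ α * (1 - x.1 - x.2) ^ γ) := by positivity
  have hC : 0 ≤ (1 + (1 / 3) ^ γ) * (x.1 ^ α * x.2 ^ β) := by positivity
  have power_le (a t : ℝ) (ht : 1 / 3 ≤ t) (ht' : t ≤ 1) : t ^ a ≤ 1 + (1 / 3) ^ a :=
    rpow_le_one_add_rpow (by norm_num) ht ht'
  obtain hx₁ | hx₂ | hx₃ : 1 / 3 ≤ x.1 ∨ 1 / 3 ≤ x.2 ∨ 1 / 3 ≤ 1 - x.1 - x.2 := by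
    by_contra! h
    linarith
  · calc rhoT α β γ x = x.1 ^ α * ((1 - x.1 - x.2) ^ γ * x.2 ^ β) := by rw [rhoT]; ring
      _ ≤ (1 + (1 / 3) ^ α) * ((1 - x.1 - x.2) ^ γ * x.2 ^ β) := by
        gcongr; exact power_le α _ hx₁ (by linarith)
      _ ≤ _ := by linarith
  · calc rhoT α β γ x = x.2 ^ β * (x.1 ^ α * (1 - x.1 - x.2) ^ γ) := by rw [rhoT]; ring
      _ ≤ (1 + (1 / 3) ^ β) * (x.1 ^ α * (1 - x.1 - x.2) ^ γ) := by
        gcongr; exact power_le β _ hx₂ (by linarith)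
      _ ≤ _ := by linarith
  · calc rhoT α β γ x = (1 - x.1 - x.2) ^ γ * (x.1 ^ α * x.2 ^ β) := by rw [rhoT]; ring
      _ ≤ (1 + (1 / 3) ^ γ) * (x.1 ^ α * x.2 ^ β) := by
        gcongr; exact power_le γ _ hx₃ (by linarith)
      _ ≤ _ := by linarith

theorem integrableOn_rhoT (hα : -1 < α) (hβ : -1 < β) (hγ : -1 < γ) :
    IntegrableOn (rhoT α β γ) Ttri := by
  have hA := integrable_unitRpow hα
  have hB := integrable_unitRpow hβ
  have hC : Integrable fun t => unitRpow γ (1 - t) := (integrable_unitRpow hγ).comp_sub_left 1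
  have hCB : Integrable fun x : ℝ × ℝ => unitRpow γ (1 - (x.1 + x.2)) * unitRpow β x.2 :=
    (measurePreserving_add_prod volume volume).integrable_comp_of_integrable (hC.mul_prod hB)
  have hAC : Integrable fun x : ℝ × ℝ => unitRpow α x.1 * unitRpow γ (1 - (x.2 + x.1)) :=
    (measurePreserving_prod_add_right volume volume).integrable_comp_of_integrable
      (hA.mul_prod hC)
  have hAB : Integrable fun x : ℝ × ℝ => unitRpow α x.1 * unitRpow β x.2 := hA.mul_prod hB
  refine Integrable.mono' (((hCB.const_mul (1 + (1 / 3) ^ α)).fun_add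
    (hAC.const_mul (1 + (1 / 3) ^ β))).fun_add (hAB.const_mul (1 + (1 / 3) ^ γ))).integrableOn
    measurable_rhoT.aestronglyMeasurable
    (ae_restrict_of_forall_mem isOpen_Ttri.measurableSet fun x hx => ?_)
  rw [Real.norm_of_nonneg (rhoT_pos hx).le]
  exact rhoT_le_sum_unitRpow hx

theorem isWeight_rhoT (hα : -1 < α) (hβ : -1 < β) (hγ : -1 < γ) : IsWeight Ttri (rhoT α β γ) :=
  ⟨measurable_rhoT, ae_restrict_of_forall_mem isOpen_Ttri.measurableSet fun _ => rhoT_pos,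
    integrableOn_rhoT hα hβ hγ⟩

end JacobiWeight

section GreenIdentity

variable {α β γ : ℝ} {u φ : ℝ × ℝ → ℝ} {U : Set (ℝ × ℝ)} {x : ℝ × ℝ}

theorem contDiffOn_gradF {n : WithTop ℕ∞} (hU : IsOpen U) (hu : ContDiffOn ℝ (n + 1) u U) :
    ContDiffOn ℝ n (gradF u) U :=
  have hDu : ContDiffOn ℝ n (fderiv ℝ u) U := hu.fderiv_of_isOpen hU le_rfl
  (hDu.clm_apply contDiffOn_const).prodMk (hDu.clm_apply contDiffOn_const)

theorem continuousOn_Lop (hU : IsOpen U) (hu : ContDiffOn ℝ 2 u U) :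
    ContinuousOn (Lop α β γ u) U := by
  have first (e : ℝ × ℝ) : ContDiffOn ℝ 1 (fun y => fderiv ℝ u y e) U :=
    (hu.fderiv_of_isOpen hU le_rfl).clm_apply contDiffOn_const
  have second (e e' : ℝ × ℝ) : ContinuousOn (fun x => fderiv ℝ (fun y => fderiv ℝ u y e) x e') U :=
    ((first e).continuousOn_fderiv_of_isOpen hU le_rfl).clm_apply continuousOn_const
  have hu₁ := (first (1, 0)).continuousOn
  have hu₂ := (first (0, 1)).continuousOn
  have hu₀ := hu.continuousOn
  unfold Lop
  fun_prop

/-- The vector field `Φ∇u`, as a family of components so that the divergence theorem applies. -/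
def phiGradU (u : ℝ × ℝ → ℝ) : Fin 2 → ℝ × ℝ → ℝ := ![phiGradU1 u, phiGradU2 u]

/-- The flux `ρΦ∇u` through the boundary, by components. -/
def flux (α β γ : ℝ) (u : ℝ × ℝ → ℝ) (i : Fin 2) (x : ℝ × ℝ) : ℝ :=
  rhoT α β γ x * phiGradU u i x

/-- The standard basis of `ℝ × ℝ`, with respect to which `phiGradU` and `flux` are given. -/
def planeBasis : Fin 2 → ℝ × ℝ := ![(1, 0), (0, 1)]

theorem contDiffOn_phiGradU {n : WithTop ℕ∞} (hU : IsOpen U) (hu : ContDiffOn ℝ (n + 1) u U)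
    (i : Fin 2) : ContDiffOn ℝ n (phiGradU u i) U := by
  have hDu := contDiffOn_gradF hU hu
  have hDu₁ := hDu.fst
  have hDu₂ := hDu.snd
  fin_cases i
  · change ContDiffOn ℝ n (phiGradU1 u) U
    unfold phiGradU1
    fun_prop
  · change ContDiffOn ℝ n (phiGradU2 u) U
    unfold phiGradU2
    fun_prop

theorem contDiffOn_flux {n : WithTop ℕ∞} (hu : ContDiffOn ℝ (n + 1) u Ttri) (i : Fin 2) :
    ContDiffOn ℝ n (flux α β γ u i) Ttri :=
  contDiffOn_rhoT.mul (contDiffOn_phiGradU isOpen_Ttri hu i)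

theorem sum_fderiv_phiGradU (hu : ContDiffAt ℝ 2 u x) :
    ∑ i, fderiv ℝ (phiGradU u i) x (planeBasis i) =
      (2 + x.1 ^ 2 + x.2 ^ 2) * u x - Lop 0 0 0 u x := by
  have h₁ : HasFDerivAt Prod.fst (ContinuousLinearMap.fst ℝ ℝ ℝ) x := hasFDerivAt_fst
  have h₂ : HasFDerivAt Prod.snd (ContinuousLinearMap.snd ℝ ℝ ℝ) x := hasFDerivAt_snd
  have hDu : HasFDerivAt (fderiv ℝ u) (fderiv ℝ (fderiv ℝ u) x) x :=
    ((hu.fderiv_right (m := 1) le_rfl).differentiableAt one_ne_zero).hasFDerivAt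
  have hu₁ := hDu.clm_apply (hasFDerivAt_const ((1 : ℝ), (0 : ℝ)) x)
  have hu₂ := hDu.clm_apply (hasFDerivAt_const ((0 : ℝ), (1 : ℝ)) x)
  have hΦ₁ : HasFDerivAt (phiGradU u 0) _ x :=
    ((h₁.fun_mul (h₁.const_sub 1)).fun_mul hu₁).fun_sub ((h₁.fun_mul h₂).fun_mul hu₂)
  have hΦ₂ : HasFDerivAt (phiGradU u 1) _ x :=
    ((h₁.fun_mul h₂).fun_neg.fun_mul hu₁).fun_add ((h₂.fun_mul (h₂.const_sub 1)).fun_mul hu₂)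
  have mixed_eq := hu.isSymmSndFDerivAt (by simp) (1, 0) (0, 1)
  rw [Fin.sum_univ_two, hΦ₁.fderiv, hΦ₂.fderiv, Lop, hu₁.fderiv, hu₂.fderiv]
  simp [planeBasis, mixed_eq, gradF]
  ring

theorem gradF_rhoT_mul_phiGradU (hx : x ∈ Ttri) :
    (gradF (rhoT α β γ) x).1 * phiGradU1 u x + (gradF (rhoT α β γ) x).2 * phiGradU2 u x =
      rhoT α β γ x * ((α - (α + β + γ) * x.1) * (gradF u x).1 +
        (β - (α + β + γ) * x.2) * (gradF u x).2) := by
  have hne₁ : x.1 ≠ 0 := hx.1.ne'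
  have hne₂ : x.2 ≠ 0 := hx.2.1.ne'
  have hne₃ : 1 - x.1 - x.2 ≠ 0 := by linarith [hx.2.2]
  simp only [gradF_rhoT hx, phiGradU1, phiGradU2]
  field_simp
  ring

theorem sum_fderiv_flux (hx : x ∈ Ttri) (hu : ContDiffOn ℝ 2 u Ttri) :
    ∑ i, fderiv ℝ (flux α β γ u i) x (planeBasis i) =
      rhoT α β γ x * ((2 + x.1 ^ 2 + x.2 ^ 2) * u x - Lop α β γ u x) := by
  have hnhds := isOpen_Ttri.mem_nhds hx
  have product_rule := sum_fderiv_mul_apply (e := planeBasis)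
    (((contDiffOn_rhoT (α := α) (β := β) (γ := γ)).contDiffAt hnhds).differentiableAt one_ne_zero)
    fun i => ((contDiffOn_phiGradU isOpen_Ttri hu i).contDiffAt hnhds).differentiableAt one_ne_zero
  have log_derivative := gradF_rhoT_mul_phiGradU (α := α) (β := β) (γ := γ) (u := u) hx
  rw [sum_fderiv_phiGradU (hu.contDiffAt hnhds), Fin.sum_univ_two (fun i => _ * _)] at product_rule
  refine product_rule.trans ?_
  simp only [gradF] at log_derivative
  simp only [planeBasis, phiGradU, Matrix.cons_val_zero, Matrix.cons_val_one, log_derivative, Lop]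
  ring

theorem sum_fderiv_mul_flux (hx : x ∈ Ttri) (hφ : DifferentiableAt ℝ φ x)
    (hu : ContDiffOn ℝ 2 u Ttri) :
    ∑ i, fderiv ℝ (fun y => φ y * flux α β γ u i y) x (planeBasis i) =
      rhoT α β γ x * bilPhi q11 q12 q12 q22 x (gradF φ x) (gradF u x) +
        φ x * ((2 + x.1 ^ 2 + x.2 ^ 2) * u x - Lop α β γ u x) * rhoT α β γ x := by
  have hnhds := isOpen_Ttri.mem_nhds hx
  rw [sum_fderiv_mul_apply hφ fun i =>
      ((contDiffOn_flux hu i).contDiffAt hnhds).differentiableAt one_ne_zero,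
    sum_fderiv_flux hx hu, Fin.sum_univ_two, bilPhi_q]
  simp only [flux, phiGradU, planeBasis, phiGradU1, phiGradU2, gradF, Matrix.cons_val_zero,
    Matrix.cons_val_one]
  ring

theorem sum_fderiv_barycentricProd_mul_flux :
    ∑ i, fderiv ℝ barycentricProd x (planeBasis i) * (φ x * flux α β γ u i x) =
      barycentricProd x * (φ x * ((1 - 3 * x.1) * (gradF u x).1 + (1 - 3 * x.2) * (gradF u x).2) *
        rhoT α β γ x) := by
  have htangent := gradF_barycentricProd_mul_phiGradU u x
  simp only [Fin.sum_univ_two, flux, phiGradU, planeBasis, Matrix.cons_val_zero,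
    Matrix.cons_val_one]
  simp only [gradF] at htangent ⊢
  linear_combination φ x * rhoT α β γ x * htangent

theorem integrableOn_continuousOn_mul_rhoT (hα : -1 < α) (hβ : -1 < β) (hγ : -1 < γ)
    (hφ : ContinuousOn φ (closure Ttri)) : IntegrableOn (fun x => φ x * rhoT α β γ x) Ttri :=
  (integrableOn_rhoT hα hβ hγ).continuousOn_mul_of_subset hφ isBounded_Ttri.isCompact_closure
    isOpen_Ttri.measurableSet subset_closure

theorem integral_bilPhi_gradF_add_integral_eq_zero (hα : -1 < α) (hβ : -1 < β) (hγ : -1 < γ)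
    (hU : IsOpen U) (hTU : closure Ttri ⊆ U) (hu : ContDiffOn ℝ 2 u U) (hφ : ContDiffOn ℝ 1 φ U) :
    (∫ x in Ttri, rhoT α β γ x * bilPhi q11 q12 q12 q22 x (gradF φ x) (gradF u x)) +
      ∫ x in Ttri, φ x * ((2 + x.1 ^ 2 + x.2 ^ 2) * u x - Lop α β γ u x) * rhoT α β γ x = 0 := by
  have hTU' : Ttri ⊆ U := subset_closure.trans hTU
  have hu₀ := hu.continuousOn.mono hTU
  have hφ₀ := hφ.continuousOn.mono hTU
  have hDu := (contDiffOn_gradF (n := 1) hU hu).continuousOn.mono hTU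
  have hDφ := (contDiffOn_gradF (n := 0) hU hφ).continuousOn.mono hTU
  have hDu₁ := hDu.fst
  have hDu₂ := hDu.snd
  have hDφ₁ := hDφ.fst
  have hDφ₂ := hDφ.snd
  have hLu : ContinuousOn (Lop α β γ u) (closure Ttri) := (continuousOn_Lop hU hu).mono hTU
  have integrable_grad : IntegrableOn (fun x => rhoT α β γ x *
      bilPhi q11 q12 q12 q22 x (gradF φ x) (gradF u x)) Ttri := by
    simp only [mul_comm (rhoT α β γ _), bilPhi_q]
    exact integrableOn_continuousOn_mul_rhoT hα hβ hγ (by fun_prop)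
  have integrable_res : IntegrableOn (fun x =>
      φ x * ((2 + x.1 ^ 2 + x.2 ^ 2) * u x - Lop α β γ u x) * rhoT α β γ x) Ttri :=
    integrableOn_continuousOn_mul_rhoT hα hβ hγ (by fun_prop)
  have hdiv : Set.EqOn (fun x => ∑ i, fderiv ℝ (fun y => φ y * flux α β γ u i y) x (planeBasis i))
      _ Ttri := fun x hx => sum_fderiv_mul_flux hx
    ((hφ.contDiffAt (hU.mem_nhds (hTU' hx))).differentiableAt one_ne_zero) (hu.mono hTU')
  rw [← integral_add integrable_grad integrable_res,
    ← setIntegral_congr_fun isOpen_Ttri.measurableSet hdiv]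
  refine setIntegral_sum_fderiv_eq_zero_of_tangent (p := barycentricProd)
    (b := fun x => |φ x * ((1 - 3 * x.1) * (gradF u x).1 + (1 - 3 * x.2) * (gradF u x).2)| *
      rhoT α β γ x) isOpen_Ttri isBounded_Ttri contDiff_barycentricProd
    (fun _ => barycentricProd_pos) (fun _ => barycentricProd_eq_zero_of_mem_frontier)
    (fun i => (hφ.mono hTU').mul (contDiffOn_flux (hu.mono hTU') i))
    ((integrable_grad.add integrable_res).congr_fun hdiv.symm isOpen_Ttri.measurableSet)
    (integrableOn_continuousOn_mul_rhoT hα hβ hγ (by fun_prop)) fun x hx => ?_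
  rw [sum_fderiv_barycentricProd_mul_flux, abs_mul, abs_mul, abs_of_pos (barycentricProd_pos hx),
    abs_of_pos (rhoT_pos hx)]

end GreenIdentity

/-- Every classical solution of the degenerate Neumann problem on the
triangle satisfies the weak formulation. -/
theorem classical_solution_satisfies_weak_formulation
    (α β γ : ℝ) (hα : -1 < α) (hβ : -1 < β) (hγ : -1 < γ)
    (f : ℝ × ℝ → ℝ) (hf : MemL2 Ttri (rhoT α β γ) f)
    (u : ℝ × ℝ → ℝ)
    (huC2 : ∃ U : Set (ℝ × ℝ), IsOpen U ∧ closure Ttri ⊆ U ∧ ContDiffOn ℝ 2 u U)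
    (huW : MemW Ttri (rhoT α β γ) q11 q12 q12 q22 u (gradF u))
    (hLu : ∀ x ∈ Ttri, Lop α β γ u x = f x)
    (hNeu1 : ∀ t : ℝ, 0 < t → t < 1 →
      Tendsto (fun x : ℝ × ℝ =>
          rhoT α β γ x * ((-1 : ℝ) * phiGradU1 u x + 0 * phiGradU2 u x))
        (nhdsWithin ((0 : ℝ), t) Ttri) (nhds 0))
    (hNeu2 : ∀ t : ℝ, 0 < t → t < 1 →
      Tendsto (fun x : ℝ × ℝ =>
          rhoT α β γ x * (0 * phiGradU1 u x + (-1 : ℝ) * phiGradU2 u x))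
        (nhdsWithin ((t : ℝ), (0 : ℝ)) Ttri) (nhds 0))
    (hNeu3 : ∀ t : ℝ, 0 < t → t < 1 →
      Tendsto (fun x : ℝ × ℝ => rhoT α β γ x *
          ((1 / Real.sqrt 2) * phiGradU1 u x + (1 / Real.sqrt 2) * phiGradU2 u x))
        (nhdsWithin ((t : ℝ), 1 - t) Ttri) (nhds 0)) :
    ∀ (v : ℝ × ℝ → ℝ) (h : ℝ × ℝ → ℝ × ℝ), MemW Ttri (rhoT α β γ) q11 q12 q12 q22 v h →
      (∫ x in Ttri, rhoT α β γ x * bilPhi q11 q12 q12 q22 x (h x) (gradF u x)) +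
          (∫ x in Ttri, (2 + x.1 ^ 2 + x.2 ^ 2) * v x * u x * rhoT α β γ x) =
        ∫ x in Ttri, v x * f x * rhoT α β γ x := by
  intro v h hv
  obtain ⟨U, hU, hTU, hu⟩ := huC2
  have hT := isOpen_Ttri.measurableSet
  have hρ := (isWeight_rhoT hα hβ hγ).isMomentWeight hT isBounded_Ttri
  have hcu : MemL2 Ttri (rhoT α β γ) fun x => (2 + x.1 ^ 2 + x.2 ^ 2) * u x :=
    huW.1.continuous_mul (by fun_prop) hT isBounded_Ttri
  have green (q : Poly2) :
      (∫ x in Ttri, rhoT α β γ x * bilPhi q11 q12 q12 q22 x (polyGrad q x) (gradF u x)) +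
        ∫ x in Ttri, pev q x * ((2 + x.1 ^ 2 + x.2 ^ 2) * u x - f x) * rhoT α β γ x = 0 := by
    rw [← gradF_pev, ← integral_bilPhi_gradF_add_integral_eq_zero hα hβ hγ hU hTU hu
      (contDiff_one_pev q).contDiffOn]
    exact congrArg _ (setIntegral_congr_fun hT fun x hx => by simp only [hLu x hx])
  have weak := hv.integral_add_integral_eq_zero hT hρ symPosDef_q
    (hcu.sub hρ.1 hρ.ae_nonneg hf) huW.2.1.1 green
  have split : ∫ x in Ttri, v x * ((2 + x.1 ^ 2 + x.2 ^ 2) * u x - f x) * rhoT α β γ x =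
      (∫ x in Ttri, (2 + x.1 ^ 2 + x.2 ^ 2) * v x * u x * rhoT α β γ x) -
        ∫ x in Ttri, v x * f x * rhoT α β γ x := by
    rw [← integral_sub ((hv.1.integrableOn_mul hρ.1 hρ.ae_nonneg hcu).congr
      (.of_forall fun x => by ring)) (hv.1.integrableOn_mul hρ.1 hρ.ae_nonneg hf)]
    congr with x
    ring
  linarith
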